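/- Let k be a field, 1 ≤ d < m integers, S = k[X_1, …, X_m, V, A_1, …, A_d], a = (X_i | 1 ≤ i ≤ m−1)^2 + (X_m^2) + (X_i V | 1 ≤ i ≤ m) + (V^2 − Σ_{i=1}^d A_i X_i), R = S/a, M = R_+, and let x_i, v, a_j denote the images of X_i, V, A_j in R and Q = (a_1, …, a_d)R. Then Q : M = Q + (x_i x_m | 1 ≤ i ≤ m−1) + (v). -/

import Mathlib

set_option synthInstance.maxHeartbeats 1000000
set_option maxHeartbeats 1000000

noncomputable section

open MvPolynomial

/-- The variables of `S = k[X₁,…,X_m, V, A₁,…,A_d]`. -/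
abbrev PSVar (d m : ℕ) : Type := Fin m ⊕ Unit ⊕ Fin d

/-- The polynomial ring `S = k[X₁,…,X_m, V, A₁,…,A_d]` (graded with all variables of
degree one). -/
abbrev PS (k : Type*) [Field k] (d m : ℕ) := MvPolynomial (PSVar d m) k

/-- The variable `X_{i+1}` (`0`-indexed: `i = 0, …, m-1`), with junk value `0` out of
range. -/
def pX (k : Type*) [Field k] (d m : ℕ) (i : ℕ) : PS k d m :=
  if h : i < m then X (Sum.inl ⟨i, h⟩) else 0

/-- The variable `V`. -/
def pV (k : Type*) [Field k] (d m : ℕ) : PS k d m := X (Sum.inr (Sum.inl ()))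

/-- The variable `A_{j+1}` (`0`-indexed: `j = 0, …, d-1`), with junk value `0` out of
range. -/
def pA (k : Type*) [Field k] (d m : ℕ) (j : ℕ) : PS k d m :=
  if h : j < d then X (Sum.inr (Sum.inr ⟨j, h⟩)) else 0

/-- The ideal `a = (Xᵢ ∣ 1 ≤ i ≤ m-1)² + (X_m²) + (XᵢV ∣ 1 ≤ i ≤ m) + (V² - Σⱼ AⱼXⱼ)`. -/
def aId (k : Type*) [Field k] (d m : ℕ) : Ideal (PS k d m) :=
  (Ideal.span {f | ∃ i, i < m - 1 ∧ f = pX k d m i}) ^ 2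
    ⊔ Ideal.span {pX k d m (m - 1) ^ 2}
    ⊔ Ideal.span {f | ∃ i, i < m ∧ f = pX k d m i * pV k d m}
    ⊔ Ideal.span {pV k d m ^ 2 - ∑ j ∈ Finset.range d, pA k d m j * pX k d m j}

/-- `R = S/a`. -/
abbrev Rq (k : Type*) [Field k] (d m : ℕ) := PS k d m ⧸ aId k d m

lemma constantCoeff_pX (k : Type*) [Field k] (d m i : ℕ) :
    constantCoeff (pX k d m i) = 0 := by
  unfold pX; split <;> simp

lemma constantCoeff_pA (k : Type*) [Field k] (d m j : ℕ) :
    constantCoeff (pA k d m j) = 0 := by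
  unfold pA; split <;> simp

lemma constantCoeff_pV (k : Type*) [Field k] (d m : ℕ) :
    constantCoeff (pV k d m) = 0 := by
  unfold pV; simp

lemma aId_le_ker (k : Type*) [Field k] (d m : ℕ) :
    aId k d m ≤ RingHom.ker (eval (fun _ => (0 : k))) := by
  unfold aId
  refine sup_le (sup_le (sup_le ?_ ?_) ?_) ?_
  · refine le_trans (Ideal.pow_le_self two_ne_zero) (Ideal.span_le.mpr ?_)
    rintro f ⟨i, -, rfl⟩
    simp [RingHom.mem_ker, constantCoeff_pX]
  · refine Ideal.span_le.mpr ?_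
    rintro f rfl
    simp [RingHom.mem_ker, constantCoeff_pX]
  · refine Ideal.span_le.mpr ?_
    rintro f ⟨i, -, rfl⟩
    simp [RingHom.mem_ker, constantCoeff_pX]
  · refine Ideal.span_le.mpr ?_
    rintro f rfl
    simp [RingHom.mem_ker, constantCoeff_pV, constantCoeff_pA]

/-- The augmentation `R = S/a → k` (evaluation of all the degree-one variables at `0`). -/
def augmap (k : Type*) [Field k] (d m : ℕ) : Rq k d m →+* k :=
  Ideal.Quotient.lift (aId k d m) (eval (fun _ => (0 : k)))
    (fun _ ha => aId_le_ker k d m ha)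

/-- The irrelevant maximal ideal `M = R₊` of `R`, i.e. the ideal of elements with zero
constant term (the kernel of the augmentation). -/
def Mq (k : Type*) [Field k] (d m : ℕ) : Ideal (Rq k d m) := RingHom.ker (augmap k d m)

instance (k : Type*) [Field k] (d m : ℕ) : (Mq k d m).IsMaximal :=
  RingHom.ker_isMaximal_of_surjective _
    (fun c => ⟨Ideal.Quotient.mk _ (C c), by simp [augmap]⟩)

instance (k : Type*) [Field k] (d m : ℕ) : (Mq k d m).IsPrime :=
  (inferInstance : (Mq k d m).IsMaximal).isPrime

/-- `B = R_M`, the localization of `R` at the irrelevant maximal ideal. -/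
abbrev Bloc (k : Type*) [Field k] (d m : ℕ) := Localization.AtPrime (Mq k d m)

/-- The parameter ideal `Q = (a₁, …, a_d)` of `R` generated by the images of the `Aⱼ`. -/
def Qr (k : Type*) [Field k] (d m : ℕ) : Ideal (Rq k d m) :=
  Ideal.span {f | ∃ j, j < d ∧ f = Ideal.Quotient.mk (aId k d m) (pA k d m j)}

/-- The parameter ideal `q = QB` of `B`. -/
def qB (k : Type*) [Field k] (d m : ℕ) : Ideal (Bloc k d m) :=
  Ideal.map (algebraMap (Rq k d m) (Bloc k d m)) (Qr k d m)

end

/-!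
Modulo `Q` the relations defining `R` become monomial: `XᵢXⱼ` for `i, j < m`, `X_m²`, `XᵢV`, `V²`
and the `Aⱼ`. None of these divides `XᵢX_m` with `i < m`, so every polynomial representing an
element of `Q` has zero coefficient at each divisor of `XᵢX_m`. If `f` represents an element of
`Q : M`, this applies to `f` times each variable and kills the coefficients of `f` at the proper
divisors `1`, `Xᵢ`, `X_m` of `XᵢX_m`. Thus `f` is a combination of `V`, the `Aⱼ` and monomials of
degree at least two, all of which lie in `Q + (xᵢx_m ∣ i < m) + (v)`.
-/

open MvPolynomial
open Finsupp (single)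

section Truncation

variable {σ R : Type*} [CommSemiring R]

/-- The ideal of polynomials none of whose monomials divides `X ^ n`: the kernel of the truncation
to the exponents `≤ n`. -/
noncomputable def truncIdeal (R : Type*) [CommSemiring R] (n : σ →₀ ℕ) :
    Ideal (MvPolynomial σ R) :=
  restrictSupportIdeal R (Set.Iic n)ᶜ (isLowerSet_Iic n).compl

lemma mem_truncIdeal {n : σ →₀ ℕ} {p : MvPolynomial σ R} :
    p ∈ truncIdeal R n ↔ ∀ e ≤ n, coeff e p = 0 := by
  refine (mem_restrictSupport_iff (R := R)).trans ?_
  simp only [Set.subset_def, Finset.mem_coe, mem_support_iff, Set.mem_compl_iff, Set.mem_Iic]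
  exact forall_congr' fun e => not_imp_not

lemma monomial_mem_truncIdeal {n e : σ →₀ ℕ} (he : ¬ e ≤ n) (r : R) :
    monomial e r ∈ truncIdeal R n :=
  (monomial_mem_restrictSupport R).mpr (Or.inl he)

lemma X_mem_truncIdeal {n : σ →₀ ℕ} {s : σ} (hs : n s = 0) :
    (X s : MvPolynomial σ R) ∈ truncIdeal R n :=
  monomial_mem_truncIdeal (by simp [hs]) 1

lemma X_sq_mem_truncIdeal {n : σ →₀ ℕ} {s : σ} (hs : n s < 2) :
    (X s ^ 2 : MvPolynomial σ R) ∈ truncIdeal R n := by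
  rw [X_pow_eq_monomial]
  exact monomial_mem_truncIdeal (by simpa using hs) 1

lemma coeff_eq_zero_of_forall_mul_X_mem_truncIdeal {n e : σ →₀ ℕ} {p : MvPolynomial σ R}
    (hp : ∀ s, p * X s ∈ truncIdeal R n) (he : e < n) : coeff e p = 0 := by
  obtain ⟨hle, s, hs⟩ := Finsupp.lt_def.mp he
  have hes : e + single s 1 ≤ n := by
    classical
    intro t
    by_cases hts : t = s
    · subst hts
      simpa using hs
    · simpa [Finsupp.single_apply, Ne.symm hts] using hle t
  rw [← coeff_mul_X e s p]
  exact mem_truncIdeal.mp (hp s) _ hes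

lemma mem_of_idealOfVars_sq_le {I : Ideal (MvPolynomial σ R)} (hI : idealOfVars σ R ^ 2 ≤ I)
    {p : MvPolynomial σ R} (hconst : coeff 0 p = 0)
    (hlin : ∀ s, X s ∈ I ∨ coeff (single s 1) p = 0) : p ∈ I := by
  rw [p.as_sum]
  refine I.sum_mem fun e he => ?_
  have hcoeff : coeff e p ≠ 0 := mem_support_iff.mp he
  obtain hdeg | hdeg | hdeg : e.degree = 0 ∨ e.degree = 1 ∨ 2 ≤ e.degree := by omega
  · rw [e.degree_eq_zero_iff] at hdeg
    exact absurd (hdeg ▸ hconst) hcoeff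
  · obtain ⟨s, rfl⟩ : e ∈ Set.range fun s : σ => single s 1 := Finsupp.range_single_one.ge hdeg
    rw [← C_mul_X_eq_monomial]
    exact I.mul_mem_left _ ((hlin s).resolve_right hcoeff)
  · exact hI ((monomial_mem_pow_idealOfVars_iff 2 e hcoeff).mpr hdeg)

lemma ker_constantCoeff_eq_idealOfVars :
    RingHom.ker (constantCoeff : MvPolynomial σ R →+* R) = idealOfVars σ R := by
  ext p
  rw [← pow_one (idealOfVars σ R), mem_pow_idealOfVars_iff', RingHom.mem_ker, constantCoeff_eq]
  simp [Finsupp.degree_eq_zero_iff]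

end Truncation

section Example

variable (k : Type*) [Field k] (d m : ℕ)

/-- The ideal `Q + (xᵢx_m ∣ 1 ≤ i ≤ m-1) + (v)` of `R`; its image in `R/Q` is the socle
at `M`. -/
noncomputable def socleIdeal : Ideal (Rq k d m) :=
  Qr k d m
    ⊔ Ideal.span {f | ∃ i, i < m - 1 ∧
        f = Ideal.Quotient.mk (aId k d m) (pX k d m i * pX k d m (m - 1))}
    ⊔ Ideal.span {Ideal.Quotient.mk (aId k d m) (pV k d m)}

variable {k d m}

lemma pX_val (i : Fin m) : pX k d m i = X (Sum.inl i) := by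
  simp [pX]

lemma pA_val (j : Fin d) : pA k d m j = X (Sum.inr (Sum.inr j)) := by
  simp [pA]

lemma mk_pX_mul_pX {i j : ℕ} (hi : i < m - 1) (hj : j < m - 1) :
    Ideal.Quotient.mk (aId k d m) (pX k d m i * pX k d m j) = 0 := by
  rw [Ideal.Quotient.eq_zero_iff_mem, aId, sq]
  exact Ideal.mem_sup_left <| Ideal.mem_sup_left <| Ideal.mem_sup_left <|
    Ideal.mul_mem_mul (Ideal.subset_span ⟨i, hi, rfl⟩) (Ideal.subset_span ⟨j, hj, rfl⟩)

variable (k d m) in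
lemma mk_pX_last_sq : Ideal.Quotient.mk (aId k d m) (pX k d m (m - 1) ^ 2) = 0 := by
  rw [Ideal.Quotient.eq_zero_iff_mem, aId]
  exact Ideal.mem_sup_left <| Ideal.mem_sup_left <| Ideal.mem_sup_right <|
    Ideal.mem_span_singleton_self _

lemma mk_pX_mul_pV {i : ℕ} (hi : i < m) :
    Ideal.Quotient.mk (aId k d m) (pX k d m i * pV k d m) = 0 := by
  rw [Ideal.Quotient.eq_zero_iff_mem, aId]
  exact Ideal.mem_sup_left <| Ideal.mem_sup_right <| Ideal.subset_span ⟨i, hi, rfl⟩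

lemma mk_pA_mem_Qr {j : ℕ} (hj : j < d) :
    Ideal.Quotient.mk (aId k d m) (pA k d m j) ∈ Qr k d m :=
  Ideal.subset_span ⟨j, hj, rfl⟩

variable (k d m) in
lemma mk_pV_sq_mem_Qr : Ideal.Quotient.mk (aId k d m) (pV k d m ^ 2) ∈ Qr k d m := by
  have hrel : Ideal.Quotient.mk (aId k d m) (pV k d m ^ 2) =
      Ideal.Quotient.mk (aId k d m) (∑ j ∈ Finset.range d, pA k d m j * pX k d m j) :=
    Ideal.Quotient.eq.mpr (Ideal.mem_sup_right (Ideal.mem_span_singleton_self _))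
  rw [hrel, map_sum]
  refine Ideal.sum_mem _ fun j hj => ?_
  rw [map_mul]
  exact Ideal.mul_mem_right _ _ (mk_pA_mem_Qr (Finset.mem_range.mp hj))

variable (k d m) in
lemma Mq_eq_map_idealOfVars :
    Mq k d m = (idealOfVars (PSVar d m) k).map (Ideal.Quotient.mk (aId k d m)) := by
  rw [Mq, augmap, Ideal.ker_quotient_lift, eval_zero', ker_constantCoeff_eq_idealOfVars]

lemma mem_colon_Mq_iff {I : Ideal (Rq k d m)} {f : Rq k d m} :
    f ∈ I.colon (Mq k d m) ↔ ∀ s, f * Ideal.Quotient.mk (aId k d m) (X s) ∈ I := by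
  rw [Mq_eq_map_idealOfVars, Ideal.map_span, Ideal.colon_span, Submodule.mem_colon,
    Set.forall_mem_image, Set.forall_mem_range]
  rfl

lemma mem_colon_Qr_Mq {f : Rq k d m}
    (hX : ∀ i < m, f * Ideal.Quotient.mk (aId k d m) (pX k d m i) ∈ Qr k d m)
    (hV : f * Ideal.Quotient.mk (aId k d m) (pV k d m) ∈ Qr k d m) :
    f ∈ (Qr k d m).colon (Mq k d m) := by
  refine mem_colon_Mq_iff.mpr ?_
  rintro (i | ⟨⟩ | j)
  · exact pX_val (k := k) i ▸ hX i i.isLt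
  · exact hV
  · exact pA_val (k := k) j ▸ Ideal.mul_mem_left _ f (mk_pA_mem_Qr j.isLt)

lemma mk_pX_mul_pX_last_mem_colon {i : ℕ} (hi : i < m - 1) :
    Ideal.Quotient.mk (aId k d m) (pX k d m i * pX k d m (m - 1)) ∈
      (Qr k d m).colon (Mq k d m) := by
  refine mem_colon_Qr_Mq (fun j hj => ?_) ?_
  · rw [← map_mul]
    obtain hj' | rfl : j < m - 1 ∨ j = m - 1 := by omega
    · rw [mul_right_comm, map_mul, mk_pX_mul_pX hi hj', zero_mul]
      exact zero_mem _
    · rw [mul_assoc, ← sq, map_mul, mk_pX_last_sq, mul_zero]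
      exact zero_mem _
  · rw [← map_mul, mul_right_comm, map_mul, mk_pX_mul_pV (by omega), zero_mul]
    exact zero_mem _

variable (k d m) in
lemma mk_pV_mem_colon :
    Ideal.Quotient.mk (aId k d m) (pV k d m) ∈ (Qr k d m).colon (Mq k d m) := by
  refine mem_colon_Qr_Mq (fun i hi => ?_) ?_
  · rw [← map_mul, mul_comm, mk_pX_mul_pV hi]
    exact zero_mem _
  · rw [← map_mul, ← sq]
    exact mk_pV_sq_mem_Qr k d m

variable (k d m) in
lemma socleIdeal_le_colon : socleIdeal k d m ≤ (Qr k d m).colon (Mq k d m) := by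
  refine sup_le (sup_le Ideal.le_colon ?_) ?_
  · rw [Ideal.span_le]
    rintro _ ⟨i, hi, rfl⟩
    exact mk_pX_mul_pX_last_mem_colon hi
  · exact (Ideal.span_singleton_le_iff_mem _).mpr (mk_pV_mem_colon k d m)

lemma mk_pX_mul_pX_mem_socleIdeal {i j : ℕ} (hi : i < m) (hj : j < m) :
    Ideal.Quotient.mk (aId k d m) (pX k d m i * pX k d m j) ∈ socleIdeal k d m := by
  have mul_last {l : ℕ} (hl : l < m - 1) :
      Ideal.Quotient.mk (aId k d m) (pX k d m l * pX k d m (m - 1)) ∈ socleIdeal k d m :=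
    Ideal.mem_sup_left (Ideal.mem_sup_right (Ideal.subset_span ⟨l, hl, rfl⟩))
  obtain hi' | rfl : i < m - 1 ∨ i = m - 1 := by omega
  all_goals obtain hj' | rfl : j < m - 1 ∨ j = m - 1 := by omega
  · exact mk_pX_mul_pX (k := k) (d := d) hi' hj' ▸ zero_mem _
  · exact mul_last hi'
  · exact mul_comm (pX k d m j) _ ▸ mul_last hj'
  · exact sq (pX k d m (m - 1)) ▸ mk_pX_last_sq k d m ▸ zero_mem _

variable (k d m) in
lemma mk_pV_mem_socleIdeal : Ideal.Quotient.mk (aId k d m) (pV k d m) ∈ socleIdeal k d m :=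
  Ideal.mem_sup_right (Ideal.mem_span_singleton_self _)

lemma mk_pA_mem_socleIdeal {j : ℕ} (hj : j < d) :
    Ideal.Quotient.mk (aId k d m) (pA k d m j) ∈ socleIdeal k d m :=
  Ideal.mem_sup_left (Ideal.mem_sup_left (mk_pA_mem_Qr hj))

lemma mk_X_inr_mem_socleIdeal (s : Unit ⊕ Fin d) :
    Ideal.Quotient.mk (aId k d m) (X (Sum.inr s)) ∈ socleIdeal k d m := by
  obtain ⟨⟩ | j := s
  · exact mk_pV_mem_socleIdeal k d m
  · exact pA_val (k := k) (m := m) j ▸ mk_pA_mem_socleIdeal j.isLt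

variable (k d m) in
lemma idealOfVars_sq_le_comap_socleIdeal :
    idealOfVars (PSVar d m) k ^ 2 ≤ (socleIdeal k d m).comap (Ideal.Quotient.mk (aId k d m)) := by
  rw [sq, Ideal.span_mul_span', Ideal.span_le]
  rintro _ ⟨_, ⟨s, rfl⟩, _, ⟨t, rfl⟩, rfl⟩
  obtain i | s := s
  · obtain j | t := t
    · simp only [← pX_val]
      exact mk_pX_mul_pX_mem_socleIdeal i.isLt j.isLt
    · exact Ideal.mul_mem_left _ _ (mk_X_inr_mem_socleIdeal t)
  · exact Ideal.mul_mem_right _ _ (mk_X_inr_mem_socleIdeal s)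

lemma pA_mem_truncIdeal {n : PSVar d m →₀ ℕ} (hn : ∀ l, n (Sum.inr (Sum.inr l)) = 0) (j : ℕ) :
    pA k d m j ∈ truncIdeal k n := by
  unfold pA
  split
  · exact X_mem_truncIdeal (hn _)
  · exact zero_mem _

lemma aId_le_truncIdeal {i j : Fin m} (hi : (i : ℕ) < m - 1) (hj : (j : ℕ) = m - 1) :
    aId k d m ≤ truncIdeal k (single (Sum.inl i) 1 + single (Sum.inl j) 1) := by
  have hij : i ≠ j := fun h => by omega
  have hV : pV k d m ∈ truncIdeal k (single (Sum.inl i) 1 + single (Sum.inl j) 1) :=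
    X_mem_truncIdeal (by simp)
  have hX {l : ℕ} (hl : l < m - 1) (hli : l ≠ i) :
      pX k d m l ∈ truncIdeal k (single (Sum.inl i) 1 + single (Sum.inl j) 1) := by
    rw [pX, dif_pos (by omega)]
    refine X_mem_truncIdeal ?_
    have hil : i ≠ ⟨l, by omega⟩ := fun h => hli (congrArg Fin.val h).symm
    have hjl : j ≠ ⟨l, by omega⟩ := fun h => by simp only [h] at hj; omega
    simp [hil, hjl]
  refine sup_le (sup_le (sup_le ?_ ?_) ?_) ?_
  · rw [sq, Ideal.span_mul_span', Ideal.span_le]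
    rintro _ ⟨_, ⟨a, ha, rfl⟩, _, ⟨b, hb, rfl⟩, rfl⟩
    change pX k d m a * pX k d m b ∈ truncIdeal k _
    by_cases hai : a = i
    · by_cases hbi : b = i
      · rw [hai, hbi, ← sq, pX_val]
        exact X_sq_mem_truncIdeal (by simp [hij])
      · exact Ideal.mul_mem_left _ _ (hX hb hbi)
    · exact Ideal.mul_mem_right _ _ (hX ha hai)
  · rw [Ideal.span_singleton_le_iff_mem, ← hj, pX_val]
    exact X_sq_mem_truncIdeal (by simp [hij])
  · rw [Ideal.span_le]
    rintro _ ⟨l, -, rfl⟩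
    exact Ideal.mul_mem_left _ _ hV
  · rw [Ideal.span_singleton_le_iff_mem]
    refine sub_mem (Ideal.pow_mem_of_mem _ hV 2 two_pos) (Ideal.sum_mem _ fun l _ => ?_)
    exact Ideal.mul_mem_right _ _ (pA_mem_truncIdeal (by simp) l)

lemma comap_Qr_le_truncIdeal {i j : Fin m} (hi : (i : ℕ) < m - 1) (hj : (j : ℕ) = m - 1) :
    (Qr k d m).comap (Ideal.Quotient.mk (aId k d m)) ≤
      truncIdeal k (single (Sum.inl i) 1 + single (Sum.inl j) 1) := by
  rw [← Ideal.comap_map_mk (aId_le_truncIdeal hi hj)]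
  refine Ideal.comap_mono (Ideal.span_le.mpr ?_)
  rintro _ ⟨l, -, rfl⟩
  exact Ideal.mem_map_of_mem _ (pA_mem_truncIdeal (by simp) l)

lemma coeff_eq_zero_of_mk_mem_colon {i j : Fin m} (hi : (i : ℕ) < m - 1) (hj : (j : ℕ) = m - 1)
    {p : PS k d m} (hp : Ideal.Quotient.mk (aId k d m) p ∈ (Qr k d m).colon (Mq k d m))
    {e : PSVar d m →₀ ℕ} (he : e < single (Sum.inl i) 1 + single (Sum.inl j) 1) :
    coeff e p = 0 := by
  refine coeff_eq_zero_of_forall_mul_X_mem_truncIdeal (fun s => ?_) he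
  exact comap_Qr_le_truncIdeal hi hj (mem_colon_Mq_iff.mp hp s)

variable (k d m) in
theorem colon_Q_M_of_example_general (hm : 2 ≤ m) :
    (Qr k d m).colon (Mq k d m) = socleIdeal k d m := by
  refine le_antisymm (fun f hf => ?_) (socleIdeal_le_colon k d m)
  obtain ⟨p, rfl⟩ := Ideal.Quotient.mk_surjective f
  let first : Fin m := ⟨0, by omega⟩
  let last : Fin m := ⟨m - 1, by omega⟩
  have hfirst : (first : ℕ) < m - 1 := by
    change 0 < m - 1
    omega
  refine mem_of_idealOfVars_sq_le (idealOfVars_sq_le_comap_socleIdeal k d m)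
    (coeff_eq_zero_of_mk_mem_colon hfirst (j := last) rfl hf (by simp [pos_iff_ne_zero])) ?_
  rintro (i | s)
  · right
    obtain hi | hi : (i : ℕ) < m - 1 ∨ (i : ℕ) = m - 1 := by omega
    · exact coeff_eq_zero_of_mk_mem_colon hi (j := last) rfl hf (by simp [pos_iff_ne_zero])
    · exact coeff_eq_zero_of_mk_mem_colon hfirst hi hf (by simp [pos_iff_ne_zero])
  · exact Or.inl (mk_X_inr_mem_socleIdeal s)

end Example

/-- **Goto–Sakurai, proof of Lemma (4.1) / Proposition (4.7).**  In `R = S/a` one has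
`Q : M = Q + (xᵢx_m ∣ 1 ≤ i ≤ m-1) + (v)`. -/
theorem colon_Q_M_of_example
    (k : Type*) [Field k] (d m : ℕ) (h1 : 1 ≤ d) (h2 : d < m) :
    (Qr k d m).colon (Mq k d m) =
      Qr k d m
        ⊔ Ideal.span {f | ∃ i, i < m - 1 ∧
            f = Ideal.Quotient.mk (aId k d m) (pX k d m i * pX k d m (m - 1))}
        ⊔ Ideal.span {Ideal.Quotient.mk (aId k d m) (pV k d m)} :=
  colon_Q_M_of_example_general k d m (by omega)
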